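/- arXiv:2503.19233 — 5 statements merged into one kernel-verified Lean document; each statement's English description precedes it below -/
import Mathlib

section
/- Cartan's bound for a tableau of derivations with trivial symbol: let T ⊆ Λ^{k+1}(W;V) be a tableau of k-derivations with trivial symbol, let 0 = W_0 ⊂ W_1 ⊂ … ⊂ W_n = W be a full flag of W with Cartan characters s_i = dim T_{W_{i-1}} − dim T_{W_i}, and let T^{(1)} = {ξ ∈ Hom(W,T) : δξ = 0} be the first prolongation. Then dim T^{(1)} ≤ s_1 + 2·s_2 + … + n·s_n. -/
open Module

variable {W : Type*} [AddCommGroup W] [Module ℝ W] [FiniteDimensional ℝ W]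
variable {V : Type*} [AddCommGroup V] [Module ℝ V] [FiniteDimensional ℝ V]

/-- The alternating `m`-linear maps `W^m → V` vanishing whenever all of their arguments lie
in the subspace `U ⊆ W`.  For a tableau `T ⊆ Λ^m(W;V)`, the subspace `T_U` is
`T ⊓ vanishingOn m U`. -/
def vanishingOn (m : ℕ) (U : Submodule ℝ W) :
    Submodule ℝ (AlternatingMap ℝ W V (Fin m)) where
  carrier := {c | ∀ u : Fin m → W, (∀ i, u i ∈ U) → c u = 0}
  zero_mem' := by intro u _; simp
  add_mem' := by intro a b ha hb u hu; simp [ha u hu, hb u hu]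
  smul_mem' := by intro r a ha u hu; simp [ha u hu]

/-- The first prolongation `T^{(1)} = {ξ ∈ Hom(W,T) : δξ = 0}` of a tableau
`T ⊆ Λ^{k+1}(W;V)` of `k`-derivations with trivial symbol, where the Spencer differential is
`(δξ)(w₀,…,w_{k+1}) = ∑ᵢ (-1)^i ξ(wᵢ)(w₀,…,ŵᵢ,…,w_{k+1})`. -/
def prolongation {k : ℕ} (T : Submodule ℝ (AlternatingMap ℝ W V (Fin (k + 1)))) :
    Submodule ℝ (W →ₗ[ℝ] AlternatingMap ℝ W V (Fin (k + 1))) where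
  carrier := {ξ | (∀ w : W, ξ w ∈ T) ∧
    ∀ w : Fin (k + 2) → W,
      ∑ i : Fin (k + 2), ((-1 : ℝ) ^ (i : ℕ)) • ξ (w i) (w ∘ i.succAbove) = 0}
  zero_mem' := by
    refine ⟨fun w => T.zero_mem, fun w => ?_⟩
    simp
  add_mem' := by
    rintro a b ⟨ha1, ha2⟩ ⟨hb1, hb2⟩
    refine ⟨fun w => T.add_mem (ha1 w) (hb1 w), fun w => ?_⟩
    have h := ha2 w
    have h' := hb2 w
    simp only [LinearMap.add_apply, AlternatingMap.add_apply, smul_add,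
      Finset.sum_add_distrib, h, h', add_zero]
  smul_mem' := by
    rintro c ξ ⟨h1, h2⟩
    refine ⟨fun w => T.smul_mem c (h1 w), fun w => ?_⟩
    have h := h2 w
    calc ∑ i : Fin (k + 2), ((-1 : ℝ) ^ (i : ℕ)) • (c • ξ) (w i) (w ∘ i.succAbove)
        = c • ∑ i : Fin (k + 2), ((-1 : ℝ) ^ (i : ℕ)) • ξ (w i) (w ∘ i.succAbove) := by
          rw [Finset.smul_sum]
          refine Finset.sum_congr rfl fun i _ => ?_
          rw [LinearMap.smul_apply, AlternatingMap.smul_apply, smul_comm]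
      _ = 0 := by rw [h, smul_zero]

instance finite_alternatingMap (m : ℕ) : Module.Finite ℝ (AlternatingMap ℝ W V (Fin m)) :=
  Module.Finite.of_injective
    (AlternatingMap.toMultilinearMapLM (R := ℝ) (S := ℝ) (M := W) (N := V) (ι := Fin m))
    AlternatingMap.coe_multilinearMap_injective

/-- The maps in the first prolongation of `T` that vanish on the subspace `U`. -/
def prolongationVanishingOn {k : ℕ} (T : Submodule ℝ (AlternatingMap ℝ W V (Fin (k + 1))))
    (U : Submodule ℝ W) : Submodule ℝ (W →ₗ[ℝ] AlternatingMap ℝ W V (Fin (k + 1))) where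
  carrier := {ξ | ξ ∈ prolongation T ∧ ∀ u ∈ U, ξ u = 0}
  zero_mem' := ⟨zero_mem _, by simp⟩
  add_mem' := by
    rintro a b ⟨ha, ha'⟩ ⟨hb, hb'⟩
    exact ⟨add_mem ha hb, fun u hu => by simp [ha' u hu, hb' u hu]⟩
  smul_mem' := by
    rintro c a ⟨ha, ha'⟩
    exact ⟨Submodule.smul_mem _ c ha, fun u hu => by simp [ha' u hu]⟩

set_option linter.unusedSectionVars false in
/-- If `δξ = 0` and `ξ` vanishes on `U`, then every value of `ξ` vanishes on `U`. -/
theorem apply_mem_of_mem_prolongationVanishingOn {k : ℕ}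
    {T : Submodule ℝ (AlternatingMap ℝ W V (Fin (k + 1)))} {U : Submodule ℝ W}
    {ξ : W →ₗ[ℝ] AlternatingMap ℝ W V (Fin (k + 1))}
    (hξ : ξ ∈ prolongationVanishingOn T U) (w : W) :
    ξ w ∈ T ⊓ vanishingOn (k + 1) U := by
  refine ⟨hξ.1.1 w, fun u hu => ?_⟩
  have h := hξ.1.2 (Fin.cons w u)
  rw [Fin.sum_univ_succ] at h
  have hcons : (Fin.cons w u : Fin (k + 2) → W) ∘ Fin.succ = u := by
    ext i
    simp
  simpa [hξ.2 _ (hu _), hcons] using h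

/-- Enlarging `U` by one dimension lowers the dimension of the space of prolongations vanishing
on `U` by at most `dim T_U`. -/
theorem finrank_prolongationVanishingOn_le {k : ℕ}
    (T : Submodule ℝ (AlternatingMap ℝ W V (Fin (k + 1)))) {U U' : Submodule ℝ W}
    (hU : U ≤ U') (hrank : finrank ℝ U' = finrank ℝ U + 1) :
    finrank ℝ (prolongationVanishingOn T U) ≤
      finrank ℝ (prolongationVanishingOn T U') +
        finrank ℝ ↥(T ⊓ vanishingOn (k + 1) U) := by
  obtain ⟨w, hw, hwU⟩ : ∃ w ∈ U', w ∉ U := by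
    by_contra! h
    have := Submodule.finrank_mono (R := ℝ) (show U' ≤ U from h)
    omega
  have hsup : U ⊔ Submodule.span ℝ {w} = U' := by
    refine Submodule.eq_of_le_of_finrank_le
      (sup_le hU (by simpa [Submodule.span_singleton_le_iff_mem] using hw)) ?_
    have hlt : U < U ⊔ Submodule.span ℝ {w} :=
      lt_of_le_of_ne le_sup_left fun h => hwU <| h ▸
        Submodule.mem_sup_right (Submodule.mem_span_singleton_self w)
    have := Submodule.finrank_lt_finrank_of_lt hlt
    omega
  let f : prolongationVanishingOn T U →ₗ[ℝ] AlternatingMap ℝ W V (Fin (k + 1)) :=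
    (LinearMap.applyₗ w).comp (prolongationVanishingOn T U).subtype
  have hrange : LinearMap.range f ≤ T ⊓ vanishingOn (k + 1) U := by
    rintro _ ⟨ξ, rfl⟩
    exact apply_mem_of_mem_prolongationVanishingOn ξ.2 w
  have hker : (LinearMap.ker f).map (prolongationVanishingOn T U).subtype ≤
      prolongationVanishingOn T U' := by
    rintro _ ⟨ξ, hξ, rfl⟩
    refine ⟨ξ.2.1, fun u hu => ?_⟩
    rw [← hsup] at hu
    obtain ⟨y, hy, z, hz, rfl⟩ := Submodule.mem_sup.1 hu
    obtain ⟨a, rfl⟩ := Submodule.mem_span_singleton.1 hz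
    have hξw : (ξ : W →ₗ[ℝ] AlternatingMap ℝ W V (Fin (k + 1))) w = 0 := hξ
    simp [ξ.2.2 y hy, hξw]
  have h₁ := Submodule.finrank_mono hrange
  have h₂ := Submodule.finrank_mono hker
  rw [Submodule.finrank_map_subtype_eq] at h₂
  have h₃ := LinearMap.finrank_range_add_finrank_ker (K := ℝ)
    (V := prolongationVanishingOn T U) (V₂ := AlternatingMap ℝ W V (Fin (k + 1))) f
  omega

/-- Abel summation of the inequalities `p i ≤ p (i + 1) + t i` for an antitone `t`. -/
theorem le_add_sum_mul_sub_of_antitone {n : ℕ} (p t : Fin (n + 1) → ℕ) (ht : Antitone t)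
    (h : ∀ i : Fin n, p i.castSucc ≤ p i.succ + t i.castSucc) :
    p 0 ≤ p (Fin.last n) + n * t (Fin.last n) +
      ∑ i : Fin n, ((i : ℕ) + 1) * (t i.castSucc - t i.succ) := by
  induction n with
  | zero => simp
  | succ n ih =>
    have h₁ := ih (p ∘ Fin.castSucc) (t ∘ Fin.castSucc)
      (fun i j hij => ht (Fin.castSucc_le_castSucc_iff.2 hij)) (fun i => h i.castSucc)
    have h₂ := h (Fin.last n)
    have h₃ : t (Fin.last n).succ ≤ t (Fin.last n).castSucc := ht (Fin.castSucc_lt_succ).le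
    rw [Fin.sum_univ_castSucc]
    simp only [Function.comp_apply, Fin.castSucc_zero, Fin.succ_castSucc, Fin.val_castSucc,
      Fin.val_last, Fin.succ_last] at h₁ h₂ h₃ ⊢
    obtain ⟨d, hd⟩ := Nat.exists_eq_add_of_le h₃
    rw [hd] at h₁ h₂ ⊢
    rw [Nat.add_sub_cancel_left]
    linarith

/-- **Cartan's bound** for a tableau of `k`-derivations with trivial symbol:
for any full flag `0 = W₀ ⊂ W₁ ⊂ … ⊂ Wₙ = W` with Cartan characters
`sᵢ = dim T_{W_{i-1}} − dim T_{W_i}`, the first prolongation satisfies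
`dim T^{(1)} ≤ s₁ + 2·s₂ + … + n·sₙ`. -/
theorem cartan_bound {k n : ℕ}
    (T : Submodule ℝ (AlternatingMap ℝ W V (Fin (k + 1))))
    (Wf : Fin (n + 1) → Submodule ℝ W)
    (hmono : Monotone Wf) (hbot : Wf 0 = ⊥) (htop : Wf (Fin.last n) = ⊤)
    (hdim : ∀ i : Fin (n + 1), finrank ℝ (Wf i) = (i : ℕ)) :
    finrank ℝ ↥(prolongation T) ≤
      ∑ i : Fin n, ((i : ℕ) + 1) *
        (finrank ℝ ↥(T ⊓ vanishingOn (k + 1) (Wf i.castSucc)) -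
         finrank ℝ ↥(T ⊓ vanishingOn (k + 1) (Wf i.succ))) := by
  have hle := le_add_sum_mul_sub_of_antitone
    (fun i => finrank ℝ (prolongationVanishingOn T (Wf i)))
    (fun i => finrank ℝ ↥(T ⊓ vanishingOn (k + 1) (Wf i)))
    (fun i j hij => Submodule.finrank_mono
      (inf_le_inf_left T fun c hc u hu => hc u fun l => hmono hij (hu l)))
    (fun i => finrank_prolongationVanishingOn_le T (hmono (Fin.castSucc_lt_succ).le)
      (by simp [hdim]))
  have hzero : prolongationVanishingOn T (Wf 0) = prolongation T := by
    rw [hbot]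
    exact le_antisymm (fun ξ hξ => hξ.1) (fun ξ hξ => ⟨hξ, by simp⟩)
  have hlast : prolongationVanishingOn T (Wf (Fin.last n)) = ⊥ := by
    rw [htop, eq_bot_iff]
    exact fun ξ hξ => LinearMap.ext fun w => hξ.2 w trivial
  have hvan : T ⊓ vanishingOn (k + 1) (Wf (Fin.last n)) = ⊥ := by
    rw [htop, eq_bot_iff]
    exact fun c hc => AlternatingMap.ext fun u => hc.2 u fun _ => trivial
  beta_reduce at hle
  rw [hzero, hlast, hvan, finrank_bot, finrank_bot, mul_zero, zero_add, zero_add] at hle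
  exact hle
end

section
/- Cartan's test implies vanishing of the Spencer cohomology groups H^{0,l}: let T ⊆ Λ^{k+1}(W;V) be a tableau of k-derivations with trivial symbol and suppose there is a full flag 0 = W_0 ⊂ … ⊂ W_n = W for which dim T^{(1)} = s_1 + 2·s_2 + … + n·s_n (Cartan's bound is attained). Then for every l ≥ 2 the Spencer sequence is exact at Λ^l(W;T): every alternating l-linear map ξ : W^l → T with δξ = 0 equals δζ for some alternating (l−1)-linear map ζ : W^{l−1} → T^{(1)}, where δζ ∈ Λ^l(W;T) is the alternation of (w_1,…,w_l) ↦ ζ(w_1,…,w_{l−1})(w_l). -/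
open Module

variable {W : Type*} [AddCommGroup W] [Module ℝ W] [FiniteDimensional ℝ W]
variable {V : Type*} [AddCommGroup V] [Module ℝ V] [FiniteDimensional ℝ V]

/-- `δξ = 0` for an alternating `l`-linear map `ξ` on `W` with values in `Λ^{k+1}(W;V)`:
the Spencer differential `δξ ∈ Λ^{k+l+1}(W;V)` is the full alternation of
`(w₁,…,w_l,u₀,…,u_k) ↦ ξ(w₁,…,w_l)(u₀,…,u_k)`. -/
def SpencerZero {k l : ℕ}
    (ξ : AlternatingMap ℝ W (AlternatingMap ℝ W V (Fin (k + 1))) (Fin l)) : Prop :=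
  ∀ w : Fin (l + (k + 1)) → W,
    ∑ σ : Equiv.Perm (Fin (l + (k + 1))),
      ((Equiv.Perm.sign σ : ℤ) : ℝ) •
        ξ (fun j : Fin l => w (σ (Fin.castAdd (k + 1) j)))
          (fun j : Fin (k + 1) => w (σ (Fin.natAdd l j))) = 0

/-- Composing the summand of an alternation with a transposition changes its sign. -/
theorem sum_sign_smul_comp_swap {R N M ι : Type*} [CommRing R] [AddCommGroup N] [Module R N]
    [Fintype ι] [DecidableEq ι] (f : (ι → M) → N) (w : ι → M) {a b : ι} (hab : a ≠ b) :
    ∑ σ : Equiv.Perm ι, ((Equiv.Perm.sign σ : ℤ) : R) • f ((w ∘ σ) ∘ Equiv.swap a b) =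
      -∑ σ : Equiv.Perm ι, ((Equiv.Perm.sign σ : ℤ) : R) • f (w ∘ σ) := by
  rw [← Finset.sum_neg_distrib, ← Equiv.sum_comp (Equiv.mulRight (Equiv.swap a b))]
  refine Finset.sum_congr rfl fun σ _ => ?_
  have h : (w ∘ (σ * Equiv.swap a b : Equiv.Perm ι)) ∘ Equiv.swap a b = w ∘ σ := by
    funext j
    simp
  rw [Equiv.coe_mulRight, h]
  simp [Equiv.Perm.sign_swap hab]

section AlternatingSums

variable {R M N : Type*} [CommRing R] [AddCommGroup M] [AddCommGroup N] [Module R M] [Module R N]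

/-- The alternating sum over omitted arguments, rewritten in terms of transpositions. -/
theorem sum_neg_one_pow_smul_succAbove {l : ℕ} (F : M → AlternatingMap R M N (Fin l))
    (w : Fin (l + 1) → M) :
    ∑ i : Fin (l + 1), ((-1 : R) ^ (i : ℕ)) • F (w i) (w ∘ i.succAbove) =
      F (w 0) (fun j => w j.succ) -
        ∑ i : Fin l, F (w i.succ) (fun j => w (Equiv.swap 0 i.succ j.succ)) := by
  rw [Fin.sum_univ_succ, sub_eq_add_neg, ← Finset.sum_neg_distrib]
  congr 1
  · simp only [Fin.val_zero, pow_zero, one_smul]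
    rfl
  · refine Finset.sum_congr rfl fun i _ => ?_
    have h := (F (w i.succ)).map_perm (w ∘ i.succ.succAbove) i.cycleRange
    have h2 : (w ∘ i.succ.succAbove) ∘ i.cycleRange =
        fun j => w (Equiv.swap 0 i.succ j.succ) := by
      funext j
      simp
    rw [← h2, h, Fin.sign_cycleRange, Fin.val_succ, pow_succ, Units.smul_def,
      ← Int.cast_smul_eq_zsmul R]
    simp

theorem AlternatingMap.finset_sum_apply {ι κ : Type*} (s : Finset κ)
    (f : κ → AlternatingMap R M N ι) (v : ι → M) : (∑ i ∈ s, f i) v = ∑ i ∈ s, f i v :=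
  map_sum (⟨⟨fun g => g v, rfl⟩, fun _ _ => rfl⟩ : AlternatingMap R M N ι →+ N) f s

/-- If `ξ` vanishes as soon as its first argument lies in `U`, it vanishes as soon as some
argument does. -/
theorem AlternatingMap.eq_zero_of_mem {l : ℕ} (ξ : AlternatingMap R M N (Fin (l + 1)))
    {U : Submodule R M} (h : ∀ w : Fin (l + 1) → M, w 0 ∈ U → ξ w = 0)
    (w : Fin (l + 1) → M) (j : Fin (l + 1)) (hj : w j ∈ U) : ξ w = 0 := by
  have h2 := h (w ∘ Equiv.swap 0 j) (by simpa using hj)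
  rw [ξ.map_perm] at h2
  exact (smul_eq_zero_iff_eq _).1 h2

end AlternatingSums

section Spencer

variable {E F : Type*} [AddCommGroup E] [Module ℝ E] [AddCommGroup F] [Module ℝ F]

/-- The Spencer differential `Λ^l(E; Hom(E, A)) → Λ^{l+1}(E; A)`. -/
def spencerDelta {A : Type*} [AddCommGroup A] [Module ℝ A] {l : ℕ}
    (ζ : AlternatingMap ℝ E (E →ₗ[ℝ] A) (Fin l)) : AlternatingMap ℝ E A (Fin (l + 1)) :=
  AlternatingMap.alternatizeUncurryFin
    { toFun := fun x => (LinearMap.applyₗ (R := ℝ) x).compAlternatingMap ζ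
      map_add' := fun x y => by ext v; simp
      map_smul' := fun r x => by ext v; simp }

theorem spencerDelta_apply {A : Type*} [AddCommGroup A] [Module ℝ A] {l : ℕ}
    (ζ : AlternatingMap ℝ E (E →ₗ[ℝ] A) (Fin l)) (w : Fin (l + 1) → E) :
    spencerDelta ζ w =
      ∑ i : Fin (l + 1), ((-1 : ℝ) ^ (i : ℕ)) • ζ (w ∘ i.succAbove) (w i) := by
  rw [spencerDelta, AlternatingMap.alternatizeUncurryFin_apply]
  refine Finset.sum_congr rfl fun i _ => ?_
  rw [← Int.cast_smul_eq_zsmul ℝ]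
  simp
  rfl

theorem spencerDelta_apply_swap {A : Type*} [AddCommGroup A] [Module ℝ A] {l : ℕ}
    (ζ : AlternatingMap ℝ E (E →ₗ[ℝ] A) (Fin l)) (w : Fin (l + 1) → E) :
    spencerDelta ζ w = ζ (fun j => w j.succ) (w 0) -
      ∑ i : Fin l, ζ (fun j => w (Equiv.swap 0 i.succ j.succ)) (w i.succ) := by
  rw [spencerDelta_apply]
  exact sum_neg_one_pow_smul_succAbove
    (fun x => (LinearMap.applyₗ (R := ℝ) x).compAlternatingMap ζ) w

theorem SpencerZero.sub {k l : ℕ}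
    {ξ η : AlternatingMap ℝ E (AlternatingMap ℝ E F (Fin (k + 1))) (Fin l)}
    (hξ : SpencerZero ξ) (hη : SpencerZero η) : SpencerZero (ξ - η) := by
  intro w
  have h := hξ w
  have h' := hη w
  simp only [AlternatingMap.sub_apply, smul_sub, Finset.sum_sub_distrib, h, h', sub_zero]

/-- The composite of two consecutive Spencer differentials vanishes. -/
theorem spencerZero_spencerDelta {k m : ℕ}
    {T : Submodule ℝ (AlternatingMap ℝ E F (Fin (k + 1)))}
    (ζ : AlternatingMap ℝ E (E →ₗ[ℝ] AlternatingMap ℝ E F (Fin (k + 1))) (Fin m))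
    (hζ : ∀ w, ζ w ∈ prolongation T) : SpencerZero (spencerDelta ζ) := by
  intro w
  let z : Fin (m + 1 + (k + 1)) := Fin.castAdd (k + 1) 0
  let f : (Fin (m + 1 + (k + 1)) → E) → F := fun v =>
    ζ (fun j => v (Fin.castAdd (k + 1) j.succ)) (v z) (fun j => v (Fin.natAdd (m + 1) j))
  have hz1 : ∀ i : Fin m, z ≠ Fin.castAdd (k + 1) i.succ := fun i h => by
    simp [z, Fin.ext_iff] at h
  have hz2 : ∀ i : Fin (k + 1), z ≠ Fin.natAdd (m + 1) i := fun i h => by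
    simp [z, Fin.ext_iff] at h
    omega
  have hdelta : ∀ v : Fin (m + 1 + (k + 1)) → E,
      spencerDelta ζ (fun j => v (Fin.castAdd (k + 1) j)) (fun j => v (Fin.natAdd (m + 1) j)) =
        f v - ∑ i : Fin m, f (v ∘ Equiv.swap z (Fin.castAdd (k + 1) i.succ)) := by
    intro v
    rw [spencerDelta_apply_swap, AlternatingMap.sub_apply, AlternatingMap.finset_sum_apply]
    congr 1
    refine Finset.sum_congr rfl fun i _ => ?_
    have h1 : ∀ j : Fin m, Equiv.swap z (Fin.castAdd (k + 1) i.succ)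
        (Fin.castAdd (k + 1) j.succ) = Fin.castAdd (k + 1) (Equiv.swap 0 i.succ j.succ) :=
      fun j => ((Fin.castAdd_injective (m + 1) (k + 1)).map_swap _ _ _).symm
    have h2 : ∀ j : Fin (k + 1), Equiv.swap z (Fin.castAdd (k + 1) i.succ)
        (Fin.natAdd (m + 1) j) = Fin.natAdd (m + 1) j := fun j =>
      Equiv.swap_apply_of_ne_of_ne (hz2 j).symm (by
        intro h
        have := i.isLt
        simp [Fin.ext_iff] at h
        omega)
    simp only [f, Function.comp_apply, h1, h2, Equiv.swap_apply_left]
  have hprol : ∀ v : Fin (m + 1 + (k + 1)) → E,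
      f v = ∑ i : Fin (k + 1), f (v ∘ Equiv.swap z (Fin.natAdd (m + 1) i)) := by
    intro v
    have h := (hζ (fun j => v (Fin.castAdd (k + 1) j.succ))).2
      (Fin.cons (v z) fun j => v (Fin.natAdd (m + 1) j))
    rw [sum_neg_one_pow_smul_succAbove, sub_eq_zero] at h
    simp only [Fin.cons_zero, Fin.cons_succ] at h
    refine h.trans (Finset.sum_congr rfl fun i _ => ?_)
    have h1 : ∀ j : Fin m, Equiv.swap z (Fin.natAdd (m + 1) i)
        (Fin.castAdd (k + 1) j.succ) = Fin.castAdd (k + 1) j.succ := fun j =>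
      Equiv.swap_apply_of_ne_of_ne (hz1 j).symm (by
        intro h
        have := j.isLt
        simp [Fin.ext_iff] at h
        omega)
    have h2 : ∀ j : Fin (k + 1),
        (Fin.cons (v z) fun j => v (Fin.natAdd (m + 1) j) : Fin (k + 2) → E)
          (Equiv.swap 0 i.succ j.succ) =
        v (Equiv.swap z (Fin.natAdd (m + 1) i) (Fin.natAdd (m + 1) j)) := by
      intro j
      by_cases hij : j = i
      · subst hij
        simp
      · rw [Equiv.swap_apply_of_ne_of_ne (Fin.succ_ne_zero j) (by simpa using hij),
          Equiv.swap_apply_of_ne_of_ne (hz2 j).symm (by simpa using hij), Fin.cons_succ]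
    simp only [f, Function.comp_apply, h1, h2, Equiv.swap_apply_left]
  have key : ∑ σ : Equiv.Perm (Fin (m + 1 + (k + 1))),
      ((Equiv.Perm.sign σ : ℤ) : ℝ) • f (w ∘ σ) = 0 := by
    set S := ∑ σ : Equiv.Perm (Fin (m + 1 + (k + 1))),
      ((Equiv.Perm.sign σ : ℤ) : ℝ) • f (w ∘ σ) with hS
    have h : S = ∑ i : Fin (k + 1), -S := by
      conv_lhs => rw [hS]
      simp_rw [fun σ : Equiv.Perm (Fin (m + 1 + (k + 1))) => hprol (w ∘ σ), Finset.smul_sum]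
      rw [Finset.sum_comm]
      exact Finset.sum_congr rfl fun i _ => sum_sign_smul_comp_swap f w (hz2 i)
    rw [Finset.sum_const, Finset.card_univ, Fintype.card_fin, smul_neg, eq_neg_iff_add_eq_zero,
      ← Nat.cast_smul_eq_nsmul ℝ] at h
    have h' : ((1 : ℝ) + ((k + 1 : ℕ) : ℝ)) • S = 0 := by rw [add_smul, one_smul, h]
    exact (smul_eq_zero.1 h').resolve_left (by positivity)
  have hterm := fun σ : Equiv.Perm (Fin (m + 1 + (k + 1))) => hdelta (w ∘ σ)
  simp only [Function.comp_apply] at hterm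
  simp_rw [hterm, smul_sub, Finset.sum_sub_distrib, Finset.smul_sum]
  rw [key, Finset.sum_comm, zero_sub, neg_eq_zero]
  refine Finset.sum_eq_zero fun i _ => ?_
  rw [sum_sign_smul_comp_swap f w (hz1 i), key, neg_zero]

/-- If `ξ` is a Spencer cocycle killed by contraction with `U`, its values vanish on `U`. -/
theorem SpencerZero.mem_vanishingOn {k l : ℕ}
    {ξ : AlternatingMap ℝ E (AlternatingMap ℝ E F (Fin (k + 1))) (Fin l)}
    (hξ : SpencerZero ξ) {U : Submodule ℝ E}
    (hU : ∀ (w : Fin l → E) (j : Fin l), w j ∈ U → ξ w = 0) (w : Fin l → E) :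
    ξ w ∈ vanishingOn (k + 1) U := by
  intro u hu
  have h := hξ (Fin.append w u)
  rw [← Equiv.sum_comp (finSumFinEquiv (m := l) (n := k + 1)).permCongr] at h
  classical
  have hterm : ∀ σ : Equiv.Perm (Fin l ⊕ Fin (k + 1)),
      ((Equiv.Perm.sign (finSumFinEquiv.permCongr σ) : ℤ) : ℝ) •
        ξ (fun j => Fin.append w u (finSumFinEquiv.permCongr σ (Fin.castAdd (k + 1) j)))
          (fun j => Fin.append w u (finSumFinEquiv.permCongr σ (Fin.natAdd l j))) =
      (if Set.MapsTo σ (Set.range Sum.inl) (Set.range Sum.inl) then 1 else 0 : ℝ) • ξ w u := by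
    intro σ
    split_ifs with hσ
    · obtain ⟨⟨a, b⟩, rfl⟩ := Equiv.Perm.mem_sumCongrHom_range_of_perm_mapsTo_inl hσ
      have ha := ξ.map_perm w a
      have hb := (ξ w).map_perm u b
      simp only [Equiv.Perm.sumCongrHom_apply, Equiv.Perm.sign_permCongr,
        Equiv.Perm.sign_sumCongr, Equiv.permCongr_apply, finSumFinEquiv_symm_apply_castAdd,
        finSumFinEquiv_symm_apply_natAdd, Equiv.sumCongr_apply, Sum.map_inl, Sum.map_inr,
        finSumFinEquiv_apply_left, finSumFinEquiv_apply_right, Fin.append_left,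
        Fin.append_right, one_smul]
      change _ • ξ (w ∘ a) (u ∘ b) = _
      rw [ha, AlternatingMap.smul_apply, hb, Units.smul_def, Units.smul_def,
        ← Int.cast_smul_eq_zsmul ℝ, ← Int.cast_smul_eq_zsmul ℝ, smul_smul, smul_smul]
      rcases Int.units_eq_one_or (Equiv.Perm.sign a) with h1 | h1 <;>
        rcases Int.units_eq_one_or (Equiv.Perm.sign b) with h2 | h2 <;> simp [h1, h2]
    · have : ∃ (a : Fin l) (b : Fin (k + 1)), σ (Sum.inl a) = Sum.inr b := by
        by_contra! hne
        refine hσ ?_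
        rintro _ ⟨a, rfl⟩
        rcases hx : σ (Sum.inl a) with a' | b
        · exact ⟨a', rfl⟩
        · exact absurd hx (hne a b)
      obtain ⟨a, b, hab⟩ := this
      rw [hU _ a (by simpa [Equiv.permCongr_apply, hab] using hu b)]
      simp
  rw [Finset.sum_congr rfl fun σ _ => hterm σ, ← Finset.sum_smul] at h
  refine (smul_eq_zero.1 h).resolve_left fun h0 => ?_
  have h1 := (Finset.sum_eq_zero_iff_of_nonneg fun σ _ => by split_ifs <;> simp).1 h0 1
    (Finset.mem_univ _)
  rw [if_pos (by intro x hx; simpa using hx)] at h1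
  exact one_ne_zero h1

/-- The elements of the prolongation vanishing on `U`. -/
def prolongationKer {k : ℕ} (T : Submodule ℝ (AlternatingMap ℝ E F (Fin (k + 1))))
    (U : Submodule ℝ E) : Submodule ℝ (E →ₗ[ℝ] AlternatingMap ℝ E F (Fin (k + 1))) where
  carrier := {p | p ∈ prolongation T ∧ ∀ u ∈ U, p u = 0}
  zero_mem' := ⟨Submodule.zero_mem _, fun _ _ => rfl⟩
  add_mem' := fun ha hb =>
    ⟨Submodule.add_mem _ ha.1 hb.1, fun u hu => by simp [ha.2 u hu, hb.2 u hu]⟩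
  smul_mem' := fun c _ ha => ⟨Submodule.smul_mem _ c ha.1, fun u hu => by simp [ha.2 u hu]⟩

theorem prolongationKer_apply_mem {k : ℕ}
    {T : Submodule ℝ (AlternatingMap ℝ E F (Fin (k + 1)))} {U : Submodule ℝ E}
    {p : E →ₗ[ℝ] AlternatingMap ℝ E F (Fin (k + 1))} (hp : p ∈ prolongationKer T U) (e : E) :
    p e ∈ T ⊓ vanishingOn (k + 1) U := by
  refine ⟨hp.1.1 e, fun u hu => ?_⟩
  have h := hp.1.2 (Fin.cons e u)
  rw [sum_neg_one_pow_smul_succAbove, Finset.sum_eq_zero, sub_zero] at h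
  · simpa using h
  · intro i _
    rw [Fin.cons_succ, hp.2 _ (hu i), AlternatingMap.zero_apply]

/-- Evaluation at `e`, as a map from the elements of `T^{(1)}` vanishing on `U` to `T_U`. -/
def prolongationEval {k : ℕ} (T : Submodule ℝ (AlternatingMap ℝ E F (Fin (k + 1))))
    (U : Submodule ℝ E) (e : E) :
    prolongationKer T U →ₗ[ℝ] ↥(T ⊓ vanishingOn (k + 1) U) :=
  LinearMap.codRestrict _ (LinearMap.applyₗ (R := ℝ) e ∘ₗ (prolongationKer T U).subtype)
    fun p => prolongationKer_apply_mem p.2 e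

/-- A cocycle killed by contraction with `U` can be corrected by a coboundary so as to be killed
by contraction with `U ⊔ ℝ e`, provided every element of `T_U` is the value at `e` of an element
of the prolongation vanishing on `U`. -/
theorem exists_sub_spencerDelta_eq_zero {k m : ℕ}
    {T : Submodule ℝ (AlternatingMap ℝ E F (Fin (k + 1)))} {U : Submodule ℝ E} {e : E}
    (hsurj : Function.Surjective (prolongationEval T U e))
    (ξ : AlternatingMap ℝ E (AlternatingMap ℝ E F (Fin (k + 1))) (Fin (m + 2)))
    (hT : ∀ w, ξ w ∈ T) (hξ : SpencerZero ξ) (hU : ∀ w : Fin (m + 2) → E, w 0 ∈ U → ξ w = 0) :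
    ∃ ζ : AlternatingMap ℝ E (E →ₗ[ℝ] AlternatingMap ℝ E F (Fin (k + 1))) (Fin (m + 1)),
      (∀ w, ζ w ∈ prolongation T) ∧
        ∀ w : Fin (m + 2) → E, w 0 ∈ U ⊔ ℝ ∙ e → (ξ - spencerDelta ζ) w = 0 := by
  have : Module.Free ℝ ↥(T ⊓ vanishingOn (k + 1) U) := Module.Free.of_divisionRing ℝ _
  obtain ⟨s, hs⟩ := (prolongationEval T U e).exists_rightInverse_of_surjective
    (LinearMap.range_eq_top.2 hsurj)
  have hU' := ξ.eq_zero_of_mem hU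
  let η := (ξ.curryLeft e).codRestrict (T ⊓ vanishingOn (k + 1) U)
    fun w => ⟨hT _, hξ.mem_vanishingOn hU' _⟩
  have hηval : ∀ w, (η w : AlternatingMap ℝ E F (Fin (k + 1))) = ξ (Fin.cons e w) :=
    fun w => rfl
  have hse : ∀ c, (s c : E →ₗ[ℝ] AlternatingMap ℝ E F (Fin (k + 1))) e = c := fun c =>
    congrArg Subtype.val (LinearMap.congr_fun hs c)
  have hη0 : ∀ w : Fin (m + 1) → E, w 0 ∈ U ⊔ ℝ ∙ e → η w = 0 := by
    intro w hw
    refine Subtype.ext ?_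
    rw [hηval, Submodule.coe_zero]
    obtain ⟨x, hx, y, hy, hxy⟩ := Submodule.mem_sup.1 hw
    obtain ⟨a, rfl⟩ := Submodule.mem_span_singleton.1 hy
    have hw' : (Fin.cons e w : Fin (m + 2) → E) =
        Function.update (Fin.cons e w) 1 (x + a • e) := by
      rw [hxy, eq_comm, Function.update_eq_self_iff]
      rfl
    rw [hw', ξ.map_update_add, ξ.map_update_smul, hU' _ 1 (by simpa using hx),
      ξ.map_eq_zero_of_eq _ (i := 0) (j := 1) (by simp) (by simp), smul_zero, add_zero]
  refine ⟨((prolongationKer T U).subtype ∘ₗ s).compAlternatingMap η, fun w => (s (η w)).2.1,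
    fun w hw => ?_⟩
  rw [AlternatingMap.sub_apply, spencerDelta_apply, Fin.sum_univ_succ, Finset.sum_eq_zero,
    add_zero, sub_eq_zero]
  · obtain ⟨x, hx, y, hy, hxy⟩ := Submodule.mem_sup.1 hw
    obtain ⟨a, rfl⟩ := Submodule.mem_span_singleton.1 hy
    have hw' : w = Function.update w 0 (x + a • e) := by
      rw [hxy, Function.update_eq_self]
    have hcons : Function.update w 0 e = Fin.cons e (w ∘ Fin.succ) := by
      conv_lhs => rw [← Fin.cons_self_tail w, Fin.update_cons_zero]
      rfl
    have hlhs : ξ w = a • ξ (Fin.cons e (w ∘ Fin.succ)) := by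
      conv_lhs => rw [hw', ξ.map_update_add, ξ.map_update_smul, hU _ (by simpa using hx),
        zero_add, hcons]
    rw [hlhs, ← hxy, Fin.val_zero, pow_zero, one_smul, Fin.succAbove_zero, map_add, map_smul]
    change _ = (s (η (w ∘ Fin.succ))).1 x + a • (s (η (w ∘ Fin.succ))).1 e
    rw [(s (η (w ∘ Fin.succ))).2.2 x hx, hse, zero_add, hηval]
  · intro i _
    rw [LinearMap.compAlternatingMap_apply, hη0 _ (by simpa using hw)]
    simp

end Spencer

instance AlternatingMap.finiteDimensional {ι : Type*} [Finite ι] :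
    FiniteDimensional ℝ (AlternatingMap ℝ W V ι) :=
  FiniteDimensional.of_injective (AlternatingMap.toMultilinearMapLM (R := ℝ) (S := ℝ))
    AlternatingMap.coe_multilinearMap_injective

theorem finrank_prolongationKer {k : ℕ} (T : Submodule ℝ (AlternatingMap ℝ W V (Fin (k + 1))))
    (U : Submodule ℝ W) (e : W) :
    finrank ℝ (prolongationKer T U) =
      finrank ℝ (LinearMap.range (prolongationEval T U e)) +
        finrank ℝ (prolongationKer T (U ⊔ ℝ ∙ e)) := by
  refine (LinearMap.finrank_range_add_finrank_ker (K := ℝ) (V := prolongationKer T U)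
    (V₂ := ↥(T ⊓ vanishingOn (k + 1) U)) (prolongationEval T U e)).symm.trans ?_
  congr 1
  have hle : prolongationKer T (U ⊔ ℝ ∙ e) ≤ prolongationKer T U := fun p hp =>
    ⟨hp.1, fun u hu => hp.2 u (Submodule.mem_sup_left hu)⟩
  have hker : LinearMap.ker (prolongationEval T U e) =
      (prolongationKer T (U ⊔ ℝ ∙ e)).submoduleOf (prolongationKer T U) := by
    ext p
    rw [LinearMap.mem_ker, Submodule.submoduleOf, Submodule.mem_comap]
    constructor
    · intro h
      have he : p.1 e = 0 := congrArg Subtype.val h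
      refine ⟨p.2.1, fun u hu => ?_⟩
      obtain ⟨x, hx, y, hy, rfl⟩ := Submodule.mem_sup.1 hu
      obtain ⟨a, rfl⟩ := Submodule.mem_span_singleton.1 hy
      simp [p.2.2 x hx, he]
    · intro h
      exact Subtype.ext (h.2 e (Submodule.mem_sup_right (Submodule.mem_span_singleton_self e)))
  rw [hker]
  exact (Submodule.submoduleOfEquivOfLe hle).finrank_eq

theorem sum_succ_mul_sub_of_antitone {n : ℕ} (t : Fin (n + 1) → ℕ) (ht : Antitone t) :
    ∑ i : Fin n, ((i : ℕ) + 1) * (t i.castSucc - t i.succ) + n * t (Fin.last n) =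
      ∑ i : Fin n, t i.castSucc := by
  induction n with
  | zero => simp
  | succ n ih =>
    have h := ih (fun i => t i.castSucc) fun i j hij => ht (by simpa using hij)
    rw [Fin.sum_univ_castSucc, Fin.sum_univ_castSucc (fun i : Fin (n + 1) => t i.castSucc), ← h]
    have hle : t (Fin.last (n + 1)) ≤ t (Fin.last n).castSucc := ht (Fin.le_last _)
    obtain ⟨d, hd⟩ := Nat.exists_eq_add_of_le hle
    simp only [Fin.val_castSucc, Fin.val_last, Fin.succ_last, Fin.succ_castSucc, hd,
      Nat.add_sub_cancel_left]
    ring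

/-- **Cartan's test implies vanishing of the Spencer cohomology groups `H^{0,l}`**:
if Cartan's bound `dim T^{(1)} = ∑ i·sᵢ` is attained for some full flag, then for every
`l = m + 2 ≥ 2` the Spencer sequence is exact at `Λ^l(W;T)`: every alternating `l`-linear
`ξ : W^l → T` with `δξ = 0` is the alternation `δζ` of some alternating `(l−1)`-linear
`ζ : W^{l−1} → T^{(1)}`, i.e. `ξ(w₁,…,w_l) = ∑ᵢ (-1)^i ζ(w₁,…,ŵᵢ,…,w_l)(wᵢ)`. -/
theorem cartan_test_spencer_exact {k n : ℕ}
    (T : Submodule ℝ (AlternatingMap ℝ W V (Fin (k + 1))))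
    (Wf : Fin (n + 1) → Submodule ℝ W)
    (hmono : Monotone Wf) (hbot : Wf 0 = ⊥) (htop : Wf (Fin.last n) = ⊤)
    (hdim : ∀ i : Fin (n + 1), finrank ℝ (Wf i) = (i : ℕ))
    (hcartan : finrank ℝ ↥(prolongation T) =
      ∑ i : Fin n, ((i : ℕ) + 1) *
        (finrank ℝ ↥(T ⊓ vanishingOn (k + 1) (Wf i.castSucc)) -
         finrank ℝ ↥(T ⊓ vanishingOn (k + 1) (Wf i.succ)))) :
    ∀ (m : ℕ)
      (ξ : AlternatingMap ℝ W (AlternatingMap ℝ W V (Fin (k + 1))) (Fin (m + 2))),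
      (∀ w : Fin (m + 2) → W, ξ w ∈ T) → SpencerZero ξ →
      ∃ ζ : AlternatingMap ℝ W (W →ₗ[ℝ] AlternatingMap ℝ W V (Fin (k + 1))) (Fin (m + 1)),
        (∀ w : Fin (m + 1) → W, ζ w ∈ prolongation T) ∧
        ∀ w : Fin (m + 2) → W,
          ξ w = ∑ i : Fin (m + 2), ((-1 : ℝ) ^ (i : ℕ)) • ζ (w ∘ i.succAbove) (w i) := by
  have hstep : ∀ i : Fin n, ∃ e : W, Wf i.succ = Wf i.castSucc ⊔ ℝ ∙ e := by
    intro i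
    have hle : Wf i.castSucc ≤ Wf i.succ := hmono (Fin.castSucc_lt_succ).le
    have hlt : Wf i.castSucc < Wf i.succ := by
      refine lt_of_le_of_ne hle fun h => ?_
      have h1 := hdim i.castSucc
      rw [h, hdim i.succ] at h1
      simp at h1
    obtain ⟨e, he, he'⟩ := SetLike.exists_of_lt hlt
    refine ⟨e, (Submodule.eq_of_le_of_finrank_le
      (sup_le hle ((Submodule.span_singleton_le_iff_mem e _).2 he)) ?_).symm⟩
    have hlt' : Wf i.castSucc < Wf i.castSucc ⊔ ℝ ∙ e := by
      refine lt_of_le_of_ne le_sup_left fun h => he' ?_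
      rw [h]
      exact Submodule.mem_sup_right (Submodule.mem_span_singleton_self e)
    have h2 := Submodule.finrank_lt_finrank_of_lt hlt'
    rw [hdim] at h2
    rw [hdim]
    simpa using h2
  choose e he using hstep
  have hsurj : ∀ i : Fin n, Function.Surjective (prolongationEval T (Wf i.castSucc) (e i)) := by
    let t : Fin (n + 1) → ℕ := fun i => finrank ℝ ↥(T ⊓ vanishingOn (k + 1) (Wf i))
    let f : Fin (n + 1) → ℕ := fun i => finrank ℝ (prolongationKer T (Wf i))
    let r : Fin n → ℕ := fun i =>
      finrank ℝ (LinearMap.range (prolongationEval T (Wf i.castSucc) (e i)))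
    have hanti : Antitone t := fun i j hij =>
      Submodule.finrank_mono (inf_le_inf_left T fun c hc u hu => hc u fun a => hmono hij (hu a))
    have htlast : t (Fin.last n) = 0 := by
      refine Submodule.finrank_eq_zero.2 ((Submodule.eq_bot_iff _).2 fun c hc => ?_)
      ext u
      exact hc.2 u fun a => by simp [htop]
    have hflast : f (Fin.last n) = 0 := by
      refine Submodule.finrank_eq_zero.2 ((Submodule.eq_bot_iff _).2 fun p hp => ?_)
      exact LinearMap.ext fun u => hp.2 u (by simp [htop])
    have hfzero : f 0 = finrank ℝ (prolongation T) := by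
      have : prolongationKer T (Wf 0) = prolongation T := by
        ext p
        refine ⟨fun h => h.1, fun h => ⟨h, fun u hu => ?_⟩⟩
        rw [hbot, Submodule.mem_bot] at hu
        simp [hu]
      exact congrArg (fun S : Submodule ℝ (W →ₗ[ℝ] AlternatingMap ℝ W V (Fin (k + 1))) =>
        finrank ℝ S) this
    have hf : ∀ i, f i.castSucc = r i + f i.succ := fun i => by
      have h := finrank_prolongationKer T (Wf i.castSucc) (e i)
      rwa [← he i] at h
    have hr : ∀ i, r i ≤ t i.castSucc := fun i => Submodule.finrank_le _
    have habel := sum_succ_mul_sub_of_antitone t hanti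
    rw [htlast, mul_zero, add_zero, ← hcartan, ← hfzero] at habel
    have htel : f 0 = ∑ i, r i := by
      have h1 := Fin.sum_univ_castSucc f
      rw [Fin.sum_univ_succ, hflast, add_zero, Finset.sum_congr rfl fun i _ => hf i,
        Finset.sum_add_distrib] at h1
      omega
    intro i
    have hri := (Finset.sum_eq_sum_iff_of_le fun i _ => hr i).1 (htel.symm.trans habel) i
      (Finset.mem_univ i)
    exact LinearMap.range_eq_top.1 (Submodule.eq_top_of_finrank_eq hri)
  intro m ξ hT hξ
  have main : ∀ i : Fin (n + 1),
      ∃ ζ : AlternatingMap ℝ W (W →ₗ[ℝ] AlternatingMap ℝ W V (Fin (k + 1))) (Fin (m + 1)),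
        (∀ w, ζ w ∈ prolongation T) ∧
          ∀ w : Fin (m + 2) → W, w 0 ∈ Wf i → (ξ - spencerDelta ζ) w = 0 := by
    have hadd : ∀ ζ ζ' : AlternatingMap ℝ W
        (W →ₗ[ℝ] AlternatingMap ℝ W V (Fin (k + 1))) (Fin (m + 1)),
        ξ - spencerDelta (ζ + ζ') = ξ - spencerDelta ζ - spencerDelta ζ' := by
      intro ζ ζ'
      ext1 w
      simp only [AlternatingMap.sub_apply, spencerDelta_apply, AlternatingMap.add_apply,
        LinearMap.add_apply, smul_add, Finset.sum_add_distrib]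
      abel
    intro i
    induction i using Fin.induction with
    | zero =>
      refine ⟨0, fun w => Submodule.zero_mem _, fun w hw => ?_⟩
      rw [hbot, Submodule.mem_bot] at hw
      exact AlternatingMap.map_coord_zero _ 0 hw
    | succ i ih =>
      obtain ⟨ζ, hζ, hζU⟩ := ih
      obtain ⟨ζ', hζ', hζU'⟩ := exists_sub_spencerDelta_eq_zero (hsurj i) (ξ - spencerDelta ζ)
        (fun w => by
          rw [AlternatingMap.sub_apply, spencerDelta_apply]
          exact T.sub_mem (hT w) (T.sum_mem fun j _ => T.smul_mem _ ((hζ _).1 _)))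
        (hξ.sub (spencerZero_spencerDelta ζ hζ)) hζU
      refine ⟨ζ + ζ', fun w => Submodule.add_mem _ (hζ w) (hζ' w), fun w hw => ?_⟩
      rw [hadd]
      exact hζU' w (by rwa [← he i])
  obtain ⟨ζ, hζ, hζU⟩ := main (Fin.last n)
  refine ⟨ζ, hζ, fun w => ?_⟩
  have h := hζU w (by simp [htop])
  rwa [AlternatingMap.sub_apply, sub_eq_zero, spencerDelta_apply] at h
end

section
/- Generalized Cartan bound: let T ⊆ Λ^{k+1}(W;V) be a tableau of k-derivations with trivial symbol, let 0 = W_0 ⊂ … ⊂ W_n = W be a full flag with Cartan characters s_i, and for l ≥ 1 let L = ker(δ : Λ^l(W;T) → Λ^{k+l+1}(W;V)). Then dim L ≤ Σ_{i=1}^{n} s_i · ( C(n,l) − C(n−i,l) ), where C(a,b) denotes the binomial coefficient. -/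
open Module

variable {W : Type*} [AddCommGroup W] [Module ℝ W] [FiniteDimensional ℝ W]
variable {V : Type*} [AddCommGroup V] [Module ℝ V] [FiniteDimensional ℝ V]

/-- The kernel `L = ker(δ : Λ^l(W;T) → Λ^{k+l+1}(W;V))` of the Spencer differential, where
`δ` sends `ξ` to the full alternation of `(w₁,…,w_l,u₀,…,u_k) ↦ ξ(w₁,…,w_l)(u₀,…,u_k)`;
elements are alternating `l`-linear maps with values in the tableau `T ⊆ Λ^{k+1}(W;V)`
killed by the alternation. -/
def spencerKernel (k l : ℕ) (T : Submodule ℝ (AlternatingMap ℝ W V (Fin (k + 1)))) :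
    Submodule ℝ (AlternatingMap ℝ W (AlternatingMap ℝ W V (Fin (k + 1))) (Fin l)) where
  carrier := {ξ | (∀ w : Fin l → W, ξ w ∈ T) ∧
    ∀ w : Fin (l + (k + 1)) → W,
      ∑ σ : Equiv.Perm (Fin (l + (k + 1))),
        ((Equiv.Perm.sign σ : ℤ) : ℝ) •
          ξ (fun j : Fin l => w (σ (Fin.castAdd (k + 1) j)))
            (fun j : Fin (k + 1) => w (σ (Fin.natAdd l j))) = 0}
  zero_mem' := by
    refine ⟨fun w => T.zero_mem, fun w => ?_⟩
    simp
  add_mem' := by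
    rintro a b ⟨ha1, ha2⟩ ⟨hb1, hb2⟩
    refine ⟨fun w => T.add_mem (ha1 w) (hb1 w), fun w => ?_⟩
    have h := ha2 w
    have h' := hb2 w
    simp only [AlternatingMap.add_apply, smul_add, Finset.sum_add_distrib, h, h', add_zero]
  smul_mem' := by
    rintro c ξ ⟨h1, h2⟩
    refine ⟨fun w => T.smul_mem c (h1 w), fun w => ?_⟩
    have h := h2 w
    calc ∑ σ : Equiv.Perm (Fin (l + (k + 1))),
          ((Equiv.Perm.sign σ : ℤ) : ℝ) •
            (c • ξ) (fun j : Fin l => w (σ (Fin.castAdd (k + 1) j)))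
              (fun j : Fin (k + 1) => w (σ (Fin.natAdd l j)))
        = c • ∑ σ : Equiv.Perm (Fin (l + (k + 1))),
            ((Equiv.Perm.sign σ : ℤ) : ℝ) •
              ξ (fun j : Fin l => w (σ (Fin.castAdd (k + 1) j)))
                (fun j : Fin (k + 1) => w (σ (Fin.natAdd l j))) := by
          rw [Finset.smul_sum]
          refine Finset.sum_congr rfl fun σ _ => ?_
          rw [AlternatingMap.smul_apply, AlternatingMap.smul_apply, smul_comm]
      _ = 0 := by rw [h, smul_zero]

instance AlternatingMap.finiteDimensional_fin (m : ℕ) :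
    FiniteDimensional ℝ (AlternatingMap ℝ W V (Fin m)) :=
  FiniteDimensional.of_injective
    (AlternatingMap.toMultilinearMapLM : (W [⋀^Fin m]→ₗ[ℝ] V) →ₗ[ℝ] _)
    AlternatingMap.coe_multilinearMap_injective

/-- If a jointly injective family of linear maps `φ j : L → E` is such that `φ j x` lies in `S j`
as soon as all the `φ j' x` with `j'` of smaller rank vanish, then `dim L ≤ ∑ j, dim (S j)`. -/
theorem finrank_le_sum_of_triangular {K L E ι α : Type*} [Field K] [AddCommGroup L] [Module K L]
    [AddCommGroup E] [Module K E] [FiniteDimensional K E] [Fintype ι] [Preorder α]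
    [WellFoundedLT α] (r : ι → α) (φ : ι → L →ₗ[K] E) (S : ι → Submodule K E)
    (hS : ∀ x j, (∀ j', r j' < r j → φ j' x = 0) → φ j x ∈ S j)
    (hφ : ∀ x, (∀ j, φ j x = 0) → x = 0) :
    finrank K L ≤ ∑ j, finrank K (S j) := by
  have hp (j : ι) : ∃ p : E →ₗ[K] S j, p ∘ₗ (S j).subtype = LinearMap.id :=
    LinearMap.exists_leftInverse_of_injective _ (Submodule.ker_subtype _)
  choose p hp using hp
  rw [← Module.finrank_pi_fintype]
  refine LinearMap.finrank_le_finrank_of_injective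
    (f := LinearMap.pi fun j => p j ∘ₗ φ j) ?_
  rw [← LinearMap.ker_eq_bot, LinearMap.ker_eq_bot']
  intro x hx
  refine hφ x fun j => ?_
  induction h : r j using WellFoundedLT.induction generalizing j with
  | ind a ih =>
    subst h
    have hmem := hS x j fun j' hj' => ih _ hj' j' rfl
    have h1 : p j (φ j x) = ⟨φ j x, hmem⟩ := LinearMap.congr_fun (hp j) ⟨φ j x, hmem⟩
    have h2 : p j (φ j x) = 0 := congrFun hx j
    rw [h1] at h2
    exact congrArg Subtype.val h2

/-- Every full flag admits an adapted basis. -/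
theorem exists_basis_adapted_flag {n : ℕ} (Wf : Fin (n + 1) → Submodule ℝ W)
    (hmono : Monotone Wf) (hbot : Wf 0 = ⊥) (htop : Wf (Fin.last n) = ⊤)
    (hdim : ∀ i : Fin (n + 1), finrank ℝ (Wf i) = (i : ℕ)) :
    ∃ e : Basis (Fin n) ℝ W, ∀ m, Wf m = Submodule.span ℝ (e '' {i | i.castSucc < m}) := by
  have hlt (i : Fin n) : Wf i.castSucc < Wf i.succ := by
    refine lt_of_le_of_ne (hmono i.castSucc_lt_succ.le) fun h => ?_
    have := congrArg (fun U : Submodule ℝ W => finrank ℝ U) h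
    simp [hdim] at this
  choose e he he' using fun i => SetLike.exists_of_lt (hlt i)
  have hspan : ∀ m, Wf m = Submodule.span ℝ (e '' {i | i.castSucc < m}) := by
    intro m
    induction m using Fin.induction with
    | zero => simp [hbot]
    | succ m ih =>
      have hset : {i : Fin n | i.castSucc < m.succ} = insert m {i | i.castSucc < m.castSucc} := by
        ext i
        simp only [Set.mem_ofPred_eq, Set.mem_insert_iff, Fin.lt_def, Fin.ext_iff,
          Fin.val_castSucc, Fin.val_succ]
        omega
      rw [hset, Set.image_insert_eq, Submodule.span_insert, ← ih]
      have hle : ℝ ∙ e m ⊔ Wf m.castSucc ≤ Wf m.succ :=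
        sup_le ((Submodule.span_singleton_le_iff_mem _ _).2 (he m)) (hlt m).le
      refine (Submodule.eq_of_le_of_finrank_le hle ?_).symm
      have : Wf m.castSucc < ℝ ∙ e m ⊔ Wf m.castSucc :=
        lt_of_le_of_ne le_sup_right fun h => he' m <| by
          rw [h]; exact Submodule.mem_sup_left (Submodule.mem_span_singleton_self _)
      have := Submodule.finrank_lt_finrank_of_lt this
      rw [hdim] at this ⊢
      simpa using this
  have hcard : Fintype.card (Fin n) = finrank ℝ W := by
    rw [← finrank_top ℝ W, ← htop, hdim]; simp
  have htop' : ⊤ ≤ Submodule.span ℝ (Set.range e) := by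
    rw [← htop, hspan]
    exact Submodule.span_mono (Set.image_subset_range _ _)
  exact ⟨basisOfTopLeSpanOfCardEqFinrank e htop' hcard, by simpa using hspan⟩

/-- An alternating map vanishes on the span of part of a basis as soon as it vanishes on these
basis vectors. -/
theorem mem_vanishingOn_span_of_basis {E F : Type*} [AddCommGroup E] [Module ℝ E]
    [AddCommGroup F] [Module ℝ F] {ι : Type*} (e : Basis ι ℝ E) (s : Set ι) {m : ℕ}
    (c : AlternatingMap ℝ E F (Fin m))
    (hc : ∀ v : Fin m → ι, (∀ i, v i ∈ s) → c (fun i => e (v i)) = 0) :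
    c ∈ vanishingOn m (Submodule.span ℝ (e '' s)) := by
  classical
  intro u hu
  set π : E →ₗ[ℝ] E := e.constr ℝ fun i => if i ∈ s then e i else 0 with hπ
  have hπe (i : ι) : π (e i) = if i ∈ s then e i else 0 := by simp [hπ]
  have hπu : Set.EqOn π (LinearMap.id : E →ₗ[ℝ] E) (Submodule.span ℝ (e '' s)) := by
    refine LinearMap.eqOn_span ?_
    rintro _ ⟨i, hi, rfl⟩
    simp [hπe, hi]
  have hzero : c.compLinearMap π = 0 := by
    refine Basis.ext_alternating e fun v _ => ?_
    rw [AlternatingMap.compLinearMap_apply, AlternatingMap.zero_apply]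
    by_cases hv : ∀ i, v i ∈ s
    · simpa [hπe, hv] using hc v hv
    · push Not at hv
      obtain ⟨i, hi⟩ := hv
      exact c.map_coord_zero i (by simp [hπe, hi])
  have := congrArg (fun f : AlternatingMap ℝ E F (Fin m) => f u) hzero
  rw [AlternatingMap.compLinearMap_apply, AlternatingMap.zero_apply] at this
  rwa [funext fun i => (hπu (hu i) : π (u i) = u i)] at this

/-- Up to sign, an alternating map on a repetition-free family is its value on the sorted family. -/
theorem AlternatingMap.map_eq_zero_of_map_sorted_eq_zero {E F α : Type*} [AddCommGroup E]
    [Module ℝ E] [AddCommGroup F] [Module ℝ F] [LinearOrder α] {l : ℕ}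
    (f : AlternatingMap ℝ E F (Fin l)) (e : α → E) (v : Fin l → α) (hv : Function.Injective v)
    (J : Finset α) (hJ : J.card = l) (hvJ : Set.range v = J)
    (h : f (fun j => e (J.orderEmbOfFin hJ j)) = 0) : f (fun j => e (v j)) = 0 := by
  have hex (j : Fin l) : ∃ j', J.orderEmbOfFin hJ j' = v j := by
    rw [← Set.mem_range, Finset.range_orderEmbOfFin, ← hvJ]
    exact Set.mem_range_self j
  choose τ hτ using hex
  have hinj : Function.Injective τ := fun a b hab => hv (by rw [← hτ, ← hτ, hab])
  have := f.map_perm (fun j => e (J.orderEmbOfFin hJ j))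
    (Equiv.ofBijective τ (Finite.injective_iff_bijective.1 hinj))
  rw [h, smul_zero] at this
  rw [← this]
  congr 1
  ext j
  simp [hτ]

/-- If only the shuffles preserving the two blocks contribute to the alternation of
`(w, u) ↦ ξ w u`, then the alternation is a positive multiple of `ξ w u`. -/
theorem apply_eq_zero_of_alternation_eq_zero {E F : Type*} [AddCommGroup E] [Module ℝ E]
    [AddCommGroup F] [Module ℝ F] {p q : ℕ}
    (ξ : AlternatingMap ℝ E (AlternatingMap ℝ E F (Fin q)) (Fin p)) (w : Fin (p + q) → E)
    (hξ : ∑ σ : Equiv.Perm (Fin (p + q)), ((Equiv.Perm.sign σ : ℤ) : ℝ) •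
      ξ (fun j => w (σ (Fin.castAdd q j))) (fun j => w (σ (Fin.natAdd p j))) = 0)
    (hmix : ∀ σ : Equiv.Perm (Fin (p + q)),
      (∃ i j, σ (Fin.castAdd q i) = Fin.natAdd p j) →
        ξ (fun j => w (σ (Fin.castAdd q j))) = 0) :
    ξ (fun j => w (Fin.castAdd q j)) (fun j => w (Fin.natAdd p j)) = 0 := by
  classical
  set x := ξ (fun j => w (Fin.castAdd q j)) (fun j => w (Fin.natAdd p j)) with hx
  have hterm (σ : Equiv.Perm (Fin (p + q))) : ((Equiv.Perm.sign σ : ℤ) : ℝ) •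
      ξ (fun j => w (σ (Fin.castAdd q j))) (fun j => w (σ (Fin.natAdd p j))) =
        if ∃ i j, σ (Fin.castAdd q i) = Fin.natAdd p j then 0 else x := by
    split_ifs with hσ
    · simp [hmix σ hσ]
    · push Not at hσ
      obtain ⟨⟨σ₁, σ₂⟩, h⟩ : finSumFinEquiv.symm.permCongr σ ∈
          (Equiv.Perm.sumCongrHom (Fin p) (Fin q)).range := by
        refine Equiv.Perm.mem_sumCongrHom_range_of_perm_mapsTo_inl ?_
        rintro _ ⟨i, rfl⟩
        rcases hs : finSumFinEquiv.symm.permCongr σ (Sum.inl i) with a | a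
        · exact ⟨a, rfl⟩
        · refine absurd ?_ (hσ i a)
          simpa [Equiv.permCongr_apply, Equiv.symm_apply_eq] using hs
      obtain rfl : σ = finSumFinEquiv.permCongr (σ₁.sumCongr σ₂) := by
        have h' : σ₁.sumCongr σ₂ = finSumFinEquiv.symm.permCongr σ := h
        rw [h']
        ext; simp [Equiv.permCongr_apply]
      have h1 := ξ.map_perm (fun j => w (Fin.castAdd q j)) σ₁
      have h2 := (ξ (fun j => w (Fin.castAdd q j))).map_perm (fun j => w (Fin.natAdd p j)) σ₂
      simp only [Function.comp_def] at h1 h2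
      simp only [Equiv.permCongr_apply, finSumFinEquiv_symm_apply_castAdd,
        finSumFinEquiv_symm_apply_natAdd, Equiv.Perm.sumCongr_apply, Sum.map_inl, Sum.map_inr,
        finSumFinEquiv_apply_left, finSumFinEquiv_apply_right, h1,
        Equiv.Perm.sign_permCongr, Equiv.Perm.sign_sumCongr]
      rcases Int.units_eq_one_or (Equiv.Perm.sign σ₁) with s1 | s1 <;>
      rcases Int.units_eq_one_or (Equiv.Perm.sign σ₂) with s2 | s2 <;>
      simp [s1, s2, h2, hx, Units.smul_def]
  simp only [hterm, Finset.sum_ite, Finset.sum_const_zero, zero_add, Finset.sum_const,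
    ← Nat.cast_smul_eq_nsmul ℝ] at hξ
  refine (smul_eq_zero.1 hξ).resolve_left (Nat.cast_ne_zero.2 (Finset.card_ne_zero_of_mem (a := 1) ?_))
  simp only [Finset.mem_filter, Finset.mem_univ, true_and, Equiv.Perm.coe_one, id]
  rintro ⟨i, j, hij⟩
  have := congrArg Fin.val hij
  simp only [Fin.val_castAdd, Fin.val_natAdd] at this
  omega

/-- Telescoping bound for truncated differences. -/
theorem Fin.le_sum_tsub_of_last_eq_zero {n : ℕ} (a : Fin (n + 1) → ℕ) (ha : a (Fin.last n) = 0)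
    (m : Fin (n + 1)) :
    a m ≤ ∑ i : Fin n, if m ≤ i.castSucc then a i.castSucc - a i.succ else 0 := by
  induction m using Fin.reverseInduction with
  | last => simp [ha]
  | cast j ih =>
    rw [← Finset.add_sum_erase _ _ (Finset.mem_univ j)] at ih ⊢
    have hj : ¬ j.succ ≤ j.castSucc := not_le.2 j.castSucc_lt_succ
    rw [if_neg hj, zero_add] at ih
    rw [if_pos le_rfl]
    have : ∑ i ∈ Finset.univ.erase j,
          (if j.succ ≤ i.castSucc then a i.castSucc - a i.succ else 0) ≤
        ∑ i ∈ Finset.univ.erase j,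
          (if j.castSucc ≤ i.castSucc then a i.castSucc - a i.succ else 0) := by
      refine Finset.sum_le_sum fun i _ => ?_
      split_ifs with h1 h2
      · exact le_rfl
      · exact absurd (j.castSucc_lt_succ.le.trans h1) h2
      · exact Nat.zero_le _
      · exact le_rfl
    omega

/-- The number of `l`-subsets of `Fin n` having an element `≤ i`. -/
theorem card_subsets_min_le {n l : ℕ} (hl : 0 < l) (i : Fin n) :
    Fintype.card {J : {J : Finset (Fin n) // J.card = l} //
        J.1.orderEmbOfFin J.2 ⟨0, hl⟩ ≤ i} =
      n.choose l - (n - ((i : ℕ) + 1)).choose l := by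
  classical
  have hcompl : Fintype.card {J : {J : Finset (Fin n) // J.card = l} //
      ¬ J.1.orderEmbOfFin J.2 ⟨0, hl⟩ ≤ i} = (n - ((i : ℕ) + 1)).choose l := by
    have hcard : (Finset.powersetCard l (Finset.Ioi i)).card = (n - ((i : ℕ) + 1)).choose l := by
      rw [Finset.card_powersetCard, Fin.card_Ioi, Nat.sub_sub, Nat.add_comm 1]
    rw [← hcard, ← Fintype.card_coe]
    refine Fintype.card_congr ((Equiv.subtypeSubtypeEquivSubtypeExists _ _).trans
      (Equiv.subtypeEquivRight fun J => ?_))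
    rw [Finset.mem_powersetCard]
    constructor
    · rintro ⟨hJ, h⟩
      refine ⟨fun a ha => ?_, hJ⟩
      rw [Finset.orderEmbOfFin_zero hJ hl, not_le] at h
      exact Finset.mem_Ioi.2 (h.trans_le (Finset.min'_le _ _ ha))
    · rintro ⟨h, hJ⟩
      exact ⟨hJ, not_le.2 (Finset.mem_Ioi.1 (h (Finset.orderEmbOfFin_mem _ _ _)))⟩
  have h := Fintype.card_subtype_compl
    fun J : {J : Finset (Fin n) // J.card = l} => J.1.orderEmbOfFin J.2 ⟨0, hl⟩ ≤ i
  have hle := Fintype.card_subtype_le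
    fun J : {J : Finset (Fin n) // J.card = l} => J.1.orderEmbOfFin J.2 ⟨0, hl⟩ ≤ i
  have htot : Fintype.card {J : Finset (Fin n) // J.card = l} = n.choose l := by simp
  omega

/-- If an element of the Spencer kernel vanishes on all sorted basis families containing a vector
smaller than `e (J 0)`, then its value on the family `J` vanishes on the span of the basis vectors
preceding `e (J 0)`. -/
theorem spencerKernel_apply_mem_vanishingOn {E F : Type*} [AddCommGroup E] [Module ℝ E]
    [AddCommGroup F] [Module ℝ F] {k l n : ℕ} (hl : 0 < l)
    {T : Submodule ℝ (AlternatingMap ℝ E F (Fin (k + 1)))} (e : Basis (Fin n) ℝ E)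
    {ξ : AlternatingMap ℝ E (AlternatingMap ℝ E F (Fin (k + 1))) (Fin l)}
    (hξ : ξ ∈ spencerKernel k l T) (J : {J : Finset (Fin n) // J.card = l})
    (h : ∀ J' : {J : Finset (Fin n) // J.card = l},
      J'.1.orderEmbOfFin J'.2 ⟨0, hl⟩ < J.1.orderEmbOfFin J.2 ⟨0, hl⟩ →
        ξ (fun j => e (J'.1.orderEmbOfFin J'.2 j)) = 0) :
    ξ (fun j => e (J.1.orderEmbOfFin J.2 j)) ∈ vanishingOn (k + 1)
      (Submodule.span ℝ (e '' {i | i < J.1.orderEmbOfFin J.2 ⟨0, hl⟩})) := by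
  refine mem_vanishingOn_span_of_basis e _ _ fun v hv => ?_
  set x : Fin (l + (k + 1)) → Fin n := Fin.append (J.1.orderEmbOfFin J.2) v with hx
  have hsum := hξ.2 fun j => e (x j)
  suffices key : ξ (fun j => e (x (Fin.castAdd (k + 1) j))) (fun j => e (x (Fin.natAdd l j))) = 0 by
    simpa only [hx, Fin.append_left, Fin.append_right] using key
  refine apply_eq_zero_of_alternation_eq_zero ξ (fun j => e (x j)) hsum ?_
  rintro σ ⟨i, j, hij⟩
  by_cases hinj : Function.Injective fun a => x (σ (Fin.castAdd (k + 1) a))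
  · have hcard : (Finset.univ.image fun a => x (σ (Fin.castAdd (k + 1) a))).card = l := by
      rw [Finset.card_image_of_injective _ hinj, Finset.card_univ, Fintype.card_fin]
    refine ξ.map_eq_zero_of_map_sorted_eq_zero e _ hinj _ hcard (by simp) (h ⟨_, hcard⟩ ?_)
    rw [Finset.orderEmbOfFin_zero hcard hl]
    refine (Finset.min'_le _ (v j) ?_).trans_lt (hv j)
    exact Finset.mem_image.2 ⟨i, Finset.mem_univ _, by simp [hij, hx]⟩
  · refine ξ.map_eq_zero_of_not_injective _ fun hinj' => hinj fun a b hab => hinj' ?_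
    exact congrArg e hab

/-- **Generalized Cartan bound**: for a tableau `T ⊆ Λ^{k+1}(W;V)` of `k`-derivations with
trivial symbol, a full flag `0 = W₀ ⊂ … ⊂ Wₙ = W` with Cartan characters `sᵢ`, and `l ≥ 1`,
the kernel `L` of the Spencer differential on `Λ^l(W;T)` satisfies
`dim L ≤ ∑_{i=1}^{n} sᵢ·(C(n,l) − C(n−i,l))`. -/
theorem generalized_cartan_bound {k n : ℕ} (l : ℕ) (hl : 1 ≤ l)
    (T : Submodule ℝ (AlternatingMap ℝ W V (Fin (k + 1))))
    (Wf : Fin (n + 1) → Submodule ℝ W)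
    (hmono : Monotone Wf) (hbot : Wf 0 = ⊥) (htop : Wf (Fin.last n) = ⊤)
    (hdim : ∀ i : Fin (n + 1), finrank ℝ (Wf i) = (i : ℕ)) :
    finrank ℝ ↥(spencerKernel k l T) ≤
      ∑ i : Fin n,
        (finrank ℝ ↥(T ⊓ vanishingOn (k + 1) (Wf i.castSucc)) -
         finrank ℝ ↥(T ⊓ vanishingOn (k + 1) (Wf i.succ))) *
        (Nat.choose n l - Nat.choose (n - ((i : ℕ) + 1)) l) := by
  obtain ⟨e, he⟩ := exists_basis_adapted_flag Wf hmono hbot htop hdim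
  let minIdx (J : {J : Finset (Fin n) // J.card = l}) : Fin n := J.1.orderEmbOfFin J.2 ⟨0, hl⟩
  let a (m : Fin (n + 1)) : ℕ := finrank ℝ ↥(T ⊓ vanishingOn (k + 1) (Wf m))
  have hlast : a (Fin.last n) = 0 := by
    have : T ⊓ vanishingOn (k + 1) (Wf (Fin.last n)) = ⊥ := by
      rw [eq_bot_iff]
      rintro c ⟨-, hc⟩
      rw [htop] at hc
      exact AlternatingMap.ext fun u => hc u fun _ => Submodule.mem_top
    change finrank ℝ ↥(T ⊓ vanishingOn (k + 1) (Wf (Fin.last n))) = 0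
    rw [this, finrank_bot]
  have hbound : finrank ℝ ↥(spencerKernel k l T) ≤ ∑ J, a (minIdx J).castSucc := by
    refine finrank_le_sum_of_triangular minIdx
      (fun J =>
        { toFun := fun ξ : spencerKernel k l T => ξ.1 fun j => e (J.1.orderEmbOfFin J.2 j)
          map_add' := fun _ _ => rfl
          map_smul' := fun _ _ => rfl })
      (fun J => T ⊓ vanishingOn (k + 1) (Wf (minIdx J).castSucc)) ?_ ?_
    · intro ξ J h
      refine ⟨ξ.2.1 _, ?_⟩
      rw [he]
      exact spencerKernel_apply_mem_vanishingOn hl e ξ.2 J h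
    · intro ξ h
      refine Subtype.ext (Basis.ext_alternating e fun v hv => ?_)
      have hcard : (Finset.univ.image v).card = l := by
        rw [Finset.card_image_of_injective _ hv, Finset.card_univ, Fintype.card_fin]
      exact ξ.1.map_eq_zero_of_map_sorted_eq_zero e v hv _ hcard (by simp) (h ⟨_, hcard⟩)
  calc finrank ℝ ↥(spencerKernel k l T)
      ≤ ∑ J, a (minIdx J).castSucc := hbound
    _ ≤ ∑ J, ∑ i : Fin n, if minIdx J ≤ i then a i.castSucc - a i.succ else 0 :=
        Finset.sum_le_sum fun J _ => Fin.le_sum_tsub_of_last_eq_zero a hlast _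
    _ = ∑ i : Fin n, (a i.castSucc - a i.succ) *
          (Nat.choose n l - Nat.choose (n - ((i : ℕ) + 1)) l) := by
        rw [Finset.sum_comm]
        refine Finset.sum_congr rfl fun i _ => ?_
        rw [← card_subsets_min_le hl i, Fintype.card_subtype, ← Finset.sum_filter,
          Finset.sum_const, smul_eq_mul, mul_comm]
end

section
/- Key claim in the proof of the generalized Cartan bound: let T ⊆ Λ^{k+1}(W;V) be a tableau of k-derivations with trivial symbol and U ⊆ W a subspace. Suppose ξ ∈ Λ^l(W;T) (l ≥ 1) satisfies (i) ξ(w_1,…,w_l) = 0 whenever at least one argument w_j lies in U, and (ii) δξ = 0 in Λ^{k+l+1}(W;V). Then ξ takes values in T_U; that is, ξ(w_1,…,w_l)(u_0,…,u_k) = 0 for all w_1,…,w_l ∈ W whenever u_0,…,u_k ∈ U. -/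
open Module

variable {W : Type*} [AddCommGroup W] [Module ℝ W] [FiniteDimensional ℝ W]
variable {V : Type*} [AddCommGroup V] [Module ℝ V] [FiniteDimensional ℝ V]

/-- **Key claim in the proof of the generalized Cartan bound**: let `T ⊆ Λ^{k+1}(W;V)` be a
tableau of `k`-derivations with trivial symbol and `U ⊆ W` a subspace.  If `ξ ∈ Λ^l(W;T)`
(`l ≥ 1`) vanishes whenever at least one of its arguments lies in `U`, and `δξ = 0`, then
`ξ` takes values in `T_U`: `ξ(w₁,…,w_l)(u₀,…,u_k) = 0` whenever all `uᵢ ∈ U`. -/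
theorem spencer_kernel_claim {k : ℕ} (l : ℕ) (hl : 1 ≤ l)
    (T : Submodule ℝ (AlternatingMap ℝ W V (Fin (k + 1))))
    (U : Submodule ℝ W)
    (ξ : AlternatingMap ℝ W (AlternatingMap ℝ W V (Fin (k + 1))) (Fin l))
    (hT : ∀ w : Fin l → W, ξ w ∈ T)
    (hvan : ∀ w : Fin l → W, (∃ j, w j ∈ U) → ξ w = 0)
    (hδ : SpencerZero ξ) :
    ∀ (w : Fin l → W) (u : Fin (k + 1) → W), (∀ i, u i ∈ U) → ξ w u = 0 := by
  classical
  intro w u hu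
  let e : Fin l ⊕ Fin (k + 1) ≃ Fin (l + (k + 1)) := finSumFinEquiv
  have key : ∀ σ : Equiv.Perm (Fin l ⊕ Fin (k + 1)),
      ((Equiv.Perm.sign σ : ℤ) : ℝ) •
        ξ (fun j => Sum.elim w u (σ (Sum.inl j))) (fun j => Sum.elim w u (σ (Sum.inr j))) =
      (if Set.MapsTo σ (Set.range Sum.inl) (Set.range Sum.inl) then (1 : ℝ) else 0) •
        ξ w u := by
    intro σ
    split_ifs with h
    · obtain ⟨⟨α, β⟩, rfl⟩ := Equiv.Perm.mem_sumCongrHom_range_of_perm_mapsTo_inl h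
      have hα : ξ (fun j => w (α j)) = Equiv.Perm.sign α • ξ w := ξ.map_perm w α
      have hβ : ξ w (fun j => u (β j)) = Equiv.Perm.sign β • ξ w u := (ξ w).map_perm u β
      simp only [Equiv.Perm.sumCongrHom_apply, Equiv.Perm.sumCongr_apply, Sum.map_inl,
        Sum.map_inr, Sum.elim_inl, Sum.elim_inr, Equiv.Perm.sign_sumCongr, hα,
        AlternatingMap.smul_apply, hβ]
      rcases Int.units_eq_one_or (Equiv.Perm.sign α) with ha | ha <;>
        rcases Int.units_eq_one_or (Equiv.Perm.sign β) with hb | hb <;> simp [ha, hb]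
    · have : ∃ j i, σ (Sum.inl j) = Sum.inr i := by
        contrapose! h
        rintro _ ⟨j, rfl⟩
        rcases hj : σ (Sum.inl j) with a | b
        · exact ⟨a, rfl⟩
        · exact absurd hj (h j b)
      obtain ⟨j, i, hji⟩ := this
      rw [hvan _ ⟨j, by simpa [hji] using hu i⟩]
      simp
  have hsum := hδ (Sum.elim w u ∘ e.symm)
  rw [← e.permCongr.sum_comp] at hsum
  have hterm : ∀ σ : Equiv.Perm (Fin l ⊕ Fin (k + 1)),
      ((Equiv.Perm.sign (e.permCongr σ) : ℤ) : ℝ) •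
        ξ (fun j => (Sum.elim w u ∘ e.symm) (e.permCongr σ (Fin.castAdd (k + 1) j)))
          (fun j => (Sum.elim w u ∘ e.symm) (e.permCongr σ (Fin.natAdd l j))) =
      (if Set.MapsTo σ (Set.range Sum.inl) (Set.range Sum.inl) then (1 : ℝ) else 0) •
        ξ w u := by
    intro σ
    rw [← key σ]
    simp [e, Equiv.permCongr_apply]
  rw [Finset.sum_congr rfl fun σ _ => hterm σ, ← Finset.sum_smul] at hsum
  refine (smul_eq_zero.mp hsum).resolve_left (ne_of_gt ?_)
  refine Finset.sum_pos' (fun σ _ => by split_ifs <;> simp) ⟨1, Finset.mem_univ _, ?_⟩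
  rw [if_pos (by simp)]
  exact one_pos
end

section
/- Ranks of iterated prolongations via iterated tail sums: let n ≥ 1 and let s_1,…,s_n be natural numbers. Define s^{(0)}_i = s_i for 1 ≤ i ≤ n, and recursively s^{(m+1)}_i = Σ_{j=i}^{n} s^{(m)}_j. Then for every m ≥ 0, Σ_{i=1}^{n} i·s^{(m)}_i = Σ_{i=1}^{n} C(i+m, m+1)·s_i, where C(a,b) denotes the binomial coefficient. -/
theorem sum_Icc_one_choose_add (k j : ℕ) :
    ∑ i ∈ Finset.Icc 1 j, Nat.choose (i + k) (k + 1) = Nat.choose (j + (k + 1)) (k + 2) := by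
  induction j with
  | zero => simp
  | succ j ih =>
    rw [Finset.sum_Icc_succ_top (by omega), ih, show j + 1 + (k + 1) = (j + k + 1) + 1 by ring,
      Nat.choose_succ_succ (j + k + 1) (k + 1), add_comm, show j + 1 + k = j + k + 1 by ring]
    rfl

theorem sum_Icc_one_mul_tail_sum (n : ℕ) (c f : ℕ → ℕ) :
    ∑ i ∈ Finset.Icc 1 n, c i * ∑ j ∈ Finset.Icc i n, f j =
      ∑ j ∈ Finset.Icc 1 n, (∑ i ∈ Finset.Icc 1 j, c i) * f j := by
  simp_rw [Finset.mul_sum, Finset.sum_mul]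
  apply Finset.sum_comm'
  intro i j
  simp only [Finset.mem_Icc]
  omega

theorem sum_choose_mul_iterated_tail_sum (n : ℕ) (S : ℕ → ℕ → ℕ)
    (hSrec : ∀ m i, S (m + 1) i = ∑ j ∈ Finset.Icc i n, S m j) (m k : ℕ) :
    ∑ i ∈ Finset.Icc 1 n, Nat.choose (i + k) (k + 1) * S m i =
      ∑ i ∈ Finset.Icc 1 n, Nat.choose (i + (k + m)) (k + m + 1) * S 0 i := by
  induction m generalizing k with
  | zero => rfl
  | succ m ih =>
    simp_rw [hSrec m, sum_Icc_one_mul_tail_sum, sum_Icc_one_choose_add]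
    rw [ih (k + 1), show k + 1 + m = k + (m + 1) by ring]

/-- Ranks of iterated prolongations via iterated tail sums: if `s^{(0)}_i = s_i` and
`s^{(m+1)}_i = ∑_{j=i}^{n} s^{(m)}_j`, then for every `m`,
`∑_{i=1}^{n} i·s^{(m)}_i = ∑_{i=1}^{n} C(i+m, m+1)·s_i`. -/
theorem iterated_tail_sums (n : ℕ) (hn : 1 ≤ n) (s : ℕ → ℕ)
    (S : ℕ → ℕ → ℕ)
    (hS0 : ∀ i, S 0 i = s i)
    (hSrec : ∀ m i, S (m + 1) i = ∑ j ∈ Finset.Icc i n, S m j) :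
    ∀ m, ∑ i ∈ Finset.Icc 1 n, i * S m i =
      ∑ i ∈ Finset.Icc 1 n, Nat.choose (i + m) (m + 1) * s i := by
  intro m
  simpa [hS0] using sum_choose_mul_iterated_tail_sum n S hSrec m 0
end
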